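/- arXiv:math-ph/0212078 — 2 statements merged into one kernel-verified Lean document; each statement's English description precedes it below -/
import Mathlib

section
/- For α > 2, γ > 0 and β > 0, the function u(x) = g·(|x⊥|^{2α/β} + |x₃|^{2γ/β})^{-β/2} on ℝ³ (where x⊥ = (x₁,x₂) and g > 0) is integrable over the complement of any ball around the origin if and only if γ > α/(α-2). -/
open MeasureTheory Real Filter

/-- The anisotropic model potential `u(x) = g (|x⊥|^{2α/β} + |x₃|^{2γ/β})^{-β/2}`. -/
noncomputable def uFun (g α β γ : ℝ) (x : EuclideanSpace ℝ (Fin 3)) : ℝ :=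
  g * (Real.sqrt ((x 0) ^ 2 + (x 1) ^ 2) ^ (2 * α / β) + |x 2| ^ (2 * γ / β)) ^ (-(β / 2))

theorem aux_one_add (t a c S : ℝ) (ht : 0 ≤ t) (ha : 0 < a) (hc : 0 < c) (hcS : c ≤ S)
    (h : t ^ a ≤ S) : 1 + t ≤ (1 + (c ^ (1 / a))⁻¹) * S ^ (1 / a) := by
  have h1 : t ≤ S ^ (1 / a) := by
    calc t = (t ^ a) ^ (1 / a) := by
          rw [← Real.rpow_mul ht, mul_one_div_cancel ha.ne', Real.rpow_one]
      _ ≤ S ^ (1 / a) := by gcongr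
  have h2 : c ^ (1 / a) ≤ S ^ (1 / a) := by gcongr
  have h3 : 0 < c ^ (1 / a) := by positivity
  have h4 : 1 ≤ (c ^ (1 / a))⁻¹ * S ^ (1 / a) := by
    rw [inv_mul_eq_div, le_div_iff₀ h3]; linarith
  linarith

theorem aux_upper (α β γ p q R : ℝ) (hα : 0 < α) (hβ : 0 < β) (hγ : 0 < γ) (hR : 0 < R)
    (hp : 0 < p) (hq : 0 < q) (hpq : p / α + q / γ = 1) :
    ∃ C : ℝ, 0 < C ∧ ∀ r z : ℝ, 0 ≤ r → 0 ≤ z → (R ≤ r ∨ R ≤ z) →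
      (r ^ (2 * α / β) + z ^ (2 * γ / β)) ^ (-(β / 2)) ≤
        C * ((1 + z) ^ (-q) * (1 + r) ^ (-p)) := by
  have ha : 0 < 2 * α / β := by positivity
  have hb : 0 < 2 * γ / β := by positivity
  set a := 2 * α / β with hadef
  set b := 2 * γ / β with hbdef
  set c := min (R ^ a) (R ^ b) with hcdef
  have hc : 0 < c := by rw [hcdef]; exact lt_min (by positivity) (by positivity)
  refine ⟨(1 + (c ^ (1 / b))⁻¹) ^ q * (1 + (c ^ (1 / a))⁻¹) ^ p, by positivity, ?_⟩
  intro r z hr hz hrz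
  set S := r ^ a + z ^ b with hS
  have hra : 0 ≤ r ^ a := by positivity
  have hzb : 0 ≤ z ^ b := by positivity
  have hcS : c ≤ S := by
    rcases hrz with h | h
    · have : R ^ a ≤ r ^ a := by gcongr
      have := min_le_left (R ^ a) (R ^ b)
      linarith
    · have : R ^ b ≤ z ^ b := by gcongr
      have := min_le_right (R ^ a) (R ^ b)
      linarith
  have hSpos : 0 < S := lt_of_lt_of_le hc hcS
  have k1 := aux_one_add r a c S hr ha hc hcS (by linarith)
  have k2 := aux_one_add z b c S hz hb hc hcS (by linarith)
  have e1 : (1 + r) ^ p ≤ (1 + (c ^ (1 / a))⁻¹) ^ p * S ^ (1 / a * p) := by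
    rw [Real.rpow_mul hSpos.le, ← Real.mul_rpow (by positivity) (by positivity)]
    gcongr
  have e2 : (1 + z) ^ q ≤ (1 + (c ^ (1 / b))⁻¹) ^ q * S ^ (1 / b * q) := by
    rw [Real.rpow_mul hSpos.le, ← Real.mul_rpow (by positivity) (by positivity)]
    gcongr
  have hexp : 1 / b * q + 1 / a * p = β / 2 := by
    have : 1 / b * q + 1 / a * p = β / 2 * (p / α + q / γ) := by
      rw [hadef, hbdef]; field_simp; ring
    rw [this, hpq, mul_one]
  have e3 : (1 + z) ^ q * (1 + r) ^ p ≤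
      ((1 + (c ^ (1 / b))⁻¹) ^ q * (1 + (c ^ (1 / a))⁻¹) ^ p) * S ^ (β / 2) := by
    calc (1 + z) ^ q * (1 + r) ^ p ≤ ((1 + (c ^ (1 / b))⁻¹) ^ q * S ^ (1 / b * q)) *
          ((1 + (c ^ (1 / a))⁻¹) ^ p * S ^ (1 / a * p)) := by gcongr
      _ = _ := by rw [← hexp, Real.rpow_add hSpos]; ring
  rw [Real.rpow_neg hSpos.le, Real.rpow_neg (by positivity), Real.rpow_neg (by positivity),
    ← mul_inv, ← div_eq_mul_inv, le_div_iff₀ (by positivity), inv_mul_eq_div,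
    div_le_iff₀ (by positivity)]
  exact e3

theorem aux_lower (α β γ r z : ℝ) (hα : 0 < α) (hβ : 0 < β) (hγ : 0 < γ)
    (hr : 0 ≤ r) (hz : 0 < z) (h : r ≤ z ^ (γ / α)) :
    z ^ (-γ) ≤ 2 ^ (β / 2) * (r ^ (2 * α / β) + z ^ (2 * γ / β)) ^ (-(β / 2)) := by
  have h1 : r ^ (2 * α / β) ≤ z ^ (2 * γ / β) := by
    calc r ^ (2 * α / β) ≤ (z ^ (γ / α)) ^ (2 * α / β) := by gcongr
      _ = z ^ (2 * γ / β) := by rw [← Real.rpow_mul hz.le]; congr 1; field_simp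
  have h2 : 0 < z ^ (2 * γ / β) := by positivity
  have h3 : 0 ≤ r ^ (2 * α / β) := by positivity
  have h4 : (2 * z ^ (2 * γ / β)) ^ (-(β / 2)) ≤
      (r ^ (2 * α / β) + z ^ (2 * γ / β)) ^ (-(β / 2)) :=
    Real.rpow_le_rpow_of_nonpos (by linarith) (by linarith) (by linarith)
  have h5 : (2 * z ^ (2 * γ / β)) ^ (-(β / 2)) = 2 ^ (-(β / 2)) * z ^ (-γ) := by
    rw [Real.mul_rpow (by norm_num) h2.le, ← Real.rpow_mul hz.le]
    congr 2; field_simp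
  calc z ^ (-γ) = 2 ^ (β / 2) * (2 ^ (-(β / 2)) * z ^ (-γ)) := by
        rw [← mul_assoc, ← Real.rpow_add (by norm_num)]; simp
    _ ≤ _ := by rw [← h5]; gcongr

/-- The function in product coordinates. -/
noncomputable def vFun (g α β γ : ℝ) (p : ℝ × (Fin 2 → ℝ)) : ℝ :=
  g * (Real.sqrt ((p.2 0) ^ 2 + (p.2 1) ^ 2) ^ (2 * α / β) + |p.1| ^ (2 * γ / β)) ^ (-(β / 2))

theorem vFun_measurable (g α β γ : ℝ) : Measurable (vFun g α β γ) := by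
  unfold vFun
  fun_prop

theorem aux_transfer (g α β γ R : ℝ) (hR : 0 < R) :
    IntegrableOn (uFun g α β γ) {x : EuclideanSpace ℝ (Fin 3) | R ≤ ‖x‖} volume ↔
    IntegrableOn (vFun g α β γ)
      {p : ℝ × (Fin 2 → ℝ) | R ^ 2 ≤ (p.2 0) ^ 2 + (p.2 1) ^ 2 + p.1 ^ 2} volume := by
  have hm := (volume_preserving_piFinSuccAbove (fun _ : Fin 3 => ℝ) 2).comp
    (EuclideanSpace.volume_preserving_symm_measurableEquiv_toLp (Fin 3))
  have he := ((MeasurableEquiv.piFinSuccAbove (fun _ : Fin 3 => ℝ) 2).measurableEmbedding).comp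
    ((MeasurableEquiv.toLp 2 (Fin 3 → ℝ)).symm.measurableEmbedding)
  rw [← hm.integrableOn_comp_preimage he]
  have hs : {x : EuclideanSpace ℝ (Fin 3) | R ≤ ‖x‖} =
    (⇑(MeasurableEquiv.piFinSuccAbove (fun _ : Fin 3 => ℝ) 2) ∘
      ⇑(MeasurableEquiv.toLp 2 (Fin 3 → ℝ)).symm) ⁻¹'
      {p : ℝ × (Fin 2 → ℝ) | R ^ 2 ≤ (p.2 0) ^ 2 + (p.2 1) ^ 2 + p.1 ^ 2} := by
    ext x
    change R ≤ ‖x‖ ↔ R ^ 2 ≤ (x 0) ^ 2 + (x 1) ^ 2 + (x 2) ^ 2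
    rw [← pow_le_pow_iff_left₀ hR.le (norm_nonneg x) two_ne_zero,
      EuclideanSpace.real_norm_sq_eq, Fin.sum_univ_three]
  rw [hs]
  rfl

theorem aux_suff (g α β γ R : ℝ) (hg : 0 < g) (hα : 2 < α)
    (hβ : 0 < β) (hγ : 0 < γ) (hR : 0 < R) (h : α / (α - 2) < γ) :
    IntegrableOn (vFun g α β γ)
      {p : ℝ × (Fin 2 → ℝ) | R ^ 2 ≤ (p.2 0) ^ 2 + (p.2 1) ^ 2 + p.1 ^ 2} volume := by
  have hα0 : 0 < α := by linarith
  have h0 : 2 / α + 1 / γ < 1 := by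
    rw [div_lt_iff₀ (by linarith)] at h
    rw [div_add_div _ _ hα0.ne' hγ.ne', div_lt_one (by positivity)]
    nlinarith
  obtain ⟨p, q, hp, hq, hpq⟩ : ∃ p q : ℝ, 2 < p ∧ 1 < q ∧ p / α + q / γ = 1 := by
    set d := (1 - (2 / α + 1 / γ)) / 2 with hd
    have hdpos : 0 < d := by rw [hd]; linarith
    refine ⟨2 + α * d, 1 + γ * d, by nlinarith, by nlinarith, ?_⟩
    rw [add_div, add_div, mul_div_cancel_left₀ _ hα0.ne', mul_div_cancel_left₀ _ hγ.ne']
    rw [hd]; ring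
  obtain ⟨C, hC, hb⟩ := aux_upper α β γ p q (R / 2) hα0 hβ hγ (by linarith)
    (by linarith) (by linarith) hpq
  have i1 : Integrable (fun z : ℝ => (1 + ‖z‖) ^ (-q)) volume :=
    integrable_one_add_norm (by simpa using hq)
  have i2 : Integrable (fun y : Fin 2 → ℝ => (1 + ‖y‖) ^ (-p)) volume :=
    integrable_one_add_norm (by simpa using hp)
  have i3 : Integrable (fun w : ℝ × (Fin 2 → ℝ) =>
      (g * C) * ((1 + ‖w.1‖) ^ (-q) * (1 + ‖w.2‖) ^ (-p))) volume :=
    (i1.mul_prod i2).const_mul _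
  refine Integrable.mono' i3.integrableOn (vFun_measurable g α β γ).aestronglyMeasurable ?_
  rw [ae_restrict_iff' (measurableSet_le (by fun_prop) (by fun_prop))]
  refine Eventually.of_forall ?_
  rintro ⟨z, y⟩ hzy
  simp only [Set.mem_ofPred_eq] at hzy
  have hr0 : 0 ≤ √(y 0 ^ 2 + y 1 ^ 2) := Real.sqrt_nonneg _
  have hor : R / 2 ≤ √(y 0 ^ 2 + y 1 ^ 2) ∨ R / 2 ≤ |z| := by
    by_contra! hcon
    have s1 := Real.sq_sqrt (show 0 ≤ y 0 ^ 2 + y 1 ^ 2 by positivity)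
    have s2 := sq_abs z
    have := abs_nonneg z
    nlinarith
  have key := hb _ _ hr0 (abs_nonneg z) hor
  have hn : ‖y‖ ≤ √(y 0 ^ 2 + y 1 ^ 2) := by
    rw [pi_norm_le_iff_of_nonneg hr0]
    intro i
    apply Real.le_sqrt_of_sq_le
    rw [Real.norm_eq_abs, sq_abs]
    fin_cases i <;> simp <;> positivity
  have hn2 : (1 + √(y 0 ^ 2 + y 1 ^ 2)) ^ (-p) ≤ (1 + ‖y‖) ^ (-p) :=
    Real.rpow_le_rpow_of_nonpos (by positivity) (by linarith) (by linarith)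
  have hv0 : 0 ≤ vFun g α β γ (z, y) := by unfold vFun; positivity
  rw [Real.norm_of_nonneg hv0]
  unfold vFun
  simp only [Real.norm_eq_abs z]
  rw [mul_assoc g C]
  apply mul_le_mul_of_nonneg_left _ hg.le
  refine key.trans ?_
  gcongr

theorem aux_nec (g α β γ R : ℝ) (hg : 0 < g) (hα : 2 < α)
    (hβ : 0 < β) (hγ : 0 < γ) (hR : 0 < R)
    (h : IntegrableOn (vFun g α β γ)
      {p : ℝ × (Fin 2 → ℝ) | R ^ 2 ≤ (p.2 0) ^ 2 + (p.2 1) ^ 2 + p.1 ^ 2} volume) :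
    α / (α - 2) < γ := by
  have hα0 : 0 < α := by linarith
  set A : Set (ℝ × (Fin 2 → ℝ)) := {w | R < w.1 ∧
    ((0 < w.2 0 ∧ w.2 0 < w.1 ^ (γ / α) / 2) ∧ (0 < w.2 1 ∧ w.2 1 < w.1 ^ (γ / α) / 2))} with hA
  have hAm : MeasurableSet A := by
    have m0 : MeasurableSet {w : ℝ × (Fin 2 → ℝ) | R < w.1} :=
      measurableSet_lt (by fun_prop) (by fun_prop)
    have m1 : ∀ i : Fin 2, MeasurableSet {w : ℝ × (Fin 2 → ℝ) | 0 < w.2 i} :=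
      fun i => measurableSet_lt (by fun_prop) (by fun_prop)
    have m2 : ∀ i : Fin 2, MeasurableSet {w : ℝ × (Fin 2 → ℝ) | w.2 i < w.1 ^ (γ / α) / 2} :=
      fun i => measurableSet_lt (by fun_prop) (by fun_prop)
    exact m0.inter (((m1 0).inter (m2 0)).inter ((m1 1).inter (m2 1)))
  have hsub : A ⊆ {p : ℝ × (Fin 2 → ℝ) | R ^ 2 ≤ (p.2 0) ^ 2 + (p.2 1) ^ 2 + p.1 ^ 2} := by
    rintro ⟨z, y⟩ ⟨h1, -⟩
    simp only [Set.mem_ofPred_eq] at h1 ⊢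
    nlinarith [sq_nonneg (y 0), sq_nonneg (y 1)]
  have i1 : IntegrableOn (fun w : ℝ × (Fin 2 → ℝ) => w.1 ^ (-γ)) A volume := by
    refine Integrable.mono' ((h.mono_set hsub).const_mul (2 ^ (β / 2) / g))
      (Measurable.aestronglyMeasurable (by fun_prop)) ?_
    rw [ae_restrict_iff' hAm]
    refine Eventually.of_forall ?_
    rintro ⟨z, y⟩ ⟨h1, ⟨h2, h3⟩, h4, h5⟩
    simp only at h1 h2 h3 h4 h5 ⊢
    have hz : 0 < z := hR.trans h1
    rw [Real.norm_of_nonneg (by positivity)]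
    have := aux_lower α β γ (√(y 0 ^ 2 + y 1 ^ 2)) z hα0 hβ hγ (Real.sqrt_nonneg _) hz (by
      rw [Real.sqrt_le_left (by positivity)]
      have : y 0 + y 1 ≤ z ^ (γ / α) := by linarith
      nlinarith [mul_pos h2 h4])
    refine this.trans_eq ?_
    unfold vFun
    simp only [abs_of_pos hz]
    field_simp
  rw [← integrable_indicator_iff hAm] at i1
  have i2 := Integrable.integral_prod_left (μ := (volume : Measure ℝ))
    (ν := (volume : Measure (Fin 2 → ℝ))) i1
  have i3 : IntegrableOn (fun z : ℝ => z ^ (2 * γ / α - γ)) (Set.Ioi R) volume := by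
    refine IntegrableOn.congr_fun ((i2.const_mul 4).integrableOn) ?_ measurableSet_Ioi
    intro z hz
    have hz' : R < z := hz
    have hz0 : 0 < z := hR.trans hz'
    have hpos : 0 < z ^ (γ / α) := by positivity
    have e : (fun y : Fin 2 → ℝ => A.indicator (fun w : ℝ × (Fin 2 → ℝ) => w.1 ^ (-γ)) (z, y)) =
        (Set.univ.pi fun i : Fin 2 => Set.Ioo ((fun _ => (0 : ℝ)) i)
          ((fun _ => z ^ (γ / α) / 2) i)).indicator (fun _ => z ^ (-γ)) := by
      ext y
      simp only [Set.indicator]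
      congr 1
      simp [hA, hz', Fin.forall_fin_two]
    simp only
    rw [e, integral_indicator (MeasurableSet.univ_pi fun i => measurableSet_Ioo),
      setIntegral_const, Measure.real, Real.volume_pi_Ioo_toReal (fun i => by
        simp only; positivity)]
    simp only [Fin.prod_univ_two, smul_eq_mul, sub_zero]
    have : 2 * γ / α - γ = γ / α + γ / α + -γ := by ring
    rw [this, Real.rpow_add hz0, Real.rpow_add hz0]
    ring
  rw [integrableOn_Ioi_rpow_iff hR] at i3
  rw [div_lt_iff₀ (by linarith)]
  have : 2 * γ / α < γ - 1 := by linarith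
  rw [div_lt_iff₀ hα0] at this
  nlinarith

/-- `u` is integrable outside any ball around the origin iff `γ > α/(α-2)`. -/
theorem uFun_integrable_atInfinity_iff (g α β γ : ℝ) (hg : 0 < g) (hα : 2 < α)
    (hβ : 0 < β) (hγ : 0 < γ) (R : ℝ) (hR : 0 < R) :
    IntegrableOn (uFun g α β γ) {x : EuclideanSpace ℝ (Fin 3) | R ≤ ‖x‖} volume ↔
      α / (α - 2) < γ := by
  rw [aux_transfer g α β γ R hR]
  exact ⟨aux_nec g α β γ R hg hα hβ hγ hR, aux_suff g α β γ R hg hα hβ hγ hR⟩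
end

section
/- With u(x) = g·(|x⊥|^{2α/β} + |x₃|^{2γ/β})^{-β/2} on ℝ³, g > 0, α > 2, β > 0, α/(α-2) < γ < 3α/(α-2), and η = 3αγ/(2γ+α), one has ∫_{ℝ³} (1 - e^{-u(x)}) dx = 2π · g^{3/η} · (βη)/(3αγ) · Γ(β/α)·Γ(β/(2γ))/Γ(3β/(2η)) · Γ((η-3)/η). -/
open MeasureTheory Real Filter

noncomputable def GG (a b : ℝ) (y : Fin 3 → ℝ) : ℝ :=
  Real.sqrt ((y 0) ^ 2 + (y 1) ^ 2) ^ a + |y 2| ^ b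

lemma GG_meas (a b : ℝ) : Measurable (GG a b) := by
  unfold GG
  fun_prop

lemma GG_nonneg (a b : ℝ) (y) : 0 ≤ GG a b y := by
  unfold GG
  positivity

lemma GG_pos {a b : ℝ} {y : Fin 3 → ℝ} (hy : y ≠ 0) : 0 < GG a b y := by
  unfold GG
  by_cases h2 : y 2 = 0
  · have : 0 < (y 0) ^ 2 + (y 1) ^ 2 := by
      by_contra! h
      apply hy
      have h0 : y 0 = 0 := by nlinarith [sq_nonneg (y 0), sq_nonneg (y 1)]
      have h1 : y 1 = 0 := by nlinarith [sq_nonneg (y 0), sq_nonneg (y 1)]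
      ext i
      fin_cases i <;> simp [h0, h1, h2]
    positivity
  · positivity

lemma complex_int {a : ℝ} (ha : 0 < a) :
    ∫ x : ℂ, Real.exp (-‖x‖ ^ a) = π * Real.Gamma (2 / a + 1) := by
  rw [integral_fun_norm_addHaar (volume : Measure ℂ) (fun r => Real.exp (-r ^ a))]
  have h := integral_rpow_mul_exp_neg_rpow (p := a) (q := 1) ha (by norm_num)
  simp only [Real.rpow_one] at h
  simp only [Complex.finrank_real_complex, smul_eq_mul, nsmul_eq_mul, Measure.real,
    Complex.volume_ball]
  norm_num [h]
  rw [Real.Gamma_add_one (by positivity)]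
  ring

lemma GG_int {a b : ℝ} (ha : 0 < a) (hb : 0 < b) :
    ∫ y : Fin 3 → ℝ, Real.exp (-GG a b y) =
      2 * π * Real.Gamma (2 / a + 1) * Real.Gamma (1 / b + 1) := by
  have h1 := (volume_preserving_piFinSuccAbove (fun _ : Fin 3 => ℝ) 2).integral_comp'
    (fun z : ℝ × (Fin 2 → ℝ) =>
      Real.exp (-|z.1| ^ b) * Real.exp (-Real.sqrt (z.2 0 ^ 2 + z.2 1 ^ 2) ^ a))
  have h2 := integral_prod_mul (μ := (volume : Measure ℝ)) (ν := (volume : Measure (Fin 2 → ℝ)))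
    (fun z => Real.exp (-|z| ^ b)) (fun z => Real.exp (-Real.sqrt (z 0 ^ 2 + z 1 ^ 2) ^ a))
  have h3 := Complex.volume_preserving_equiv_pi.integral_comp'
    (fun z : Fin 2 → ℝ => Real.exp (-Real.sqrt (z 0 ^ 2 + z 1 ^ 2) ^ a))
  have h4 : ∫ z : ℝ, Real.exp (-|z| ^ b) = 2 * Real.Gamma (1 / b + 1) := by
    rw [integral_comp_abs (f := fun z => Real.exp (-z ^ b)), integral_exp_neg_rpow hb]
  rw [← h3, h4] at h2
  have h5 := complex_int ha
  have h6 : ∀ x : ℂ, Real.sqrt (Complex.measurableEquivPi x 0 ^ 2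
      + Complex.measurableEquivPi x 1 ^ 2) = ‖x‖ := by
    intro x
    rw [Complex.norm_eq_sqrt_sq_add_sq]
    rfl
  simp only [h6] at h2
  rw [h5, ← Measure.volume_eq_prod] at h2
  rw [h2] at h1
  calc _ = _ := ?_
    _ = _ := h1
    _ = _ := by ring
  refine integral_congr_ae (ae_of_all _ fun y => ?_)
  simp only [GG, neg_add, Real.exp_add]
  rw [mul_comm]
  rfl

lemma GG_scale {a b t : ℝ} (ha : 0 < a) (hb : 0 < b) (ht : 0 < t) :
    volume {y | GG a b y < t} =
      ENNReal.ofReal (t ^ (2 / a + 1 / b)) * volume {y | GG a b y < 1} := by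
  let D : Fin 3 → ℝ := ![t ^ (-(1 / a)), t ^ (-(1 / a)), t ^ (-(1 / b))]
  have hdet : LinearMap.det (Matrix.toLin' (Matrix.diagonal D)) = (t ^ (2 / a + 1 / b))⁻¹ := by
    rw [LinearMap.det_toLin', Matrix.det_diagonal, Fin.prod_univ_three]
    simp only [D, Matrix.cons_val]
    rw [← Real.rpow_add ht, ← Real.rpow_add ht, ← Real.rpow_neg ht.le]
    congr 1; ring
  have hp : 0 < t ^ (2 / a + 1 / b) := by positivity
  have h := Measure.addHaar_preimage_linearMap (volume : Measure (Fin 3 → ℝ))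
    (f := Matrix.toLin' (Matrix.diagonal D)) (by rw [hdet]; positivity) {y | GG a b y < 1}
  rw [hdet, inv_inv, abs_of_pos hp] at h
  rw [← h]
  congr 1
  ext y
  have key : GG a b (Matrix.toLin' (Matrix.diagonal D) y) = t⁻¹ * GG a b y := by
    simp only [GG, Matrix.toLin'_apply, Matrix.mulVec_diagonal]
    simp only [D, Matrix.cons_val]
    have e1 : (t ^ (-(1 / a)) * y 0) ^ 2 + (t ^ (-(1 / a)) * y 1) ^ 2
        = (t ^ (-(1 / a))) ^ 2 * (y 0 ^ 2 + y 1 ^ 2) := by ring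
    have hta : 0 < t ^ (-(1 / a)) := by positivity
    have htb : 0 < t ^ (-(1 / b)) := by positivity
    rw [e1, Real.sqrt_mul (by positivity), Real.sqrt_sq hta.le,
      Real.mul_rpow hta.le (by positivity), abs_mul, abs_of_pos htb,
      Real.mul_rpow htb.le (by positivity), ← Real.rpow_mul ht.le, ← Real.rpow_mul ht.le]
    have e2 : -(1 / a) * a = -1 := by field_simp
    have e3 : -(1 / b) * b = -1 := by field_simp
    rw [e2, e3, Real.rpow_neg_one]
    ring
  simp only [Set.mem_ofPred_eq, Set.mem_preimage, key]
  rw [inv_mul_lt_iff₀ ht, mul_one]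

lemma layer {a b : ℝ} (ha : 0 < a) (hb : 0 < b) (F f : ℝ → ℝ) (hf : Measurable f)
    (hF : ∀ y, 0 < y → ENNReal.ofReal (F y) = ∫⁻ t in Set.Ioi y, ENNReal.ofReal (f t)) :
    ∫⁻ y, ENNReal.ofReal (F (GG a b y)) =
      (∫⁻ t in Set.Ioi 0, ENNReal.ofReal (t ^ (2 / a + 1 / b) * f t))
        * volume {y | GG a b y < 1} := by
  have hG := GG_meas a b
  have hae : ∀ᵐ y : Fin 3 → ℝ, y ≠ 0 := by
    simp [ae_iff]
  have h1 : ∫⁻ y, ENNReal.ofReal (F (GG a b y)) =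
      ∫⁻ y, ∫⁻ t in Set.Ioi (0:ℝ),
        {p : (Fin 3 → ℝ) × ℝ | GG a b p.1 < p.2}.indicator (fun p => ENNReal.ofReal (f p.2)) (y, t) := by
    refine lintegral_congr_ae ?_
    filter_upwards [hae] with y hy
    have hp := GG_pos (a := a) (b := b) hy
    rw [hF _ hp, ← lintegral_indicator measurableSet_Ioi, ← lintegral_indicator measurableSet_Ioi]
    congr 1
    ext t
    by_cases h : GG a b y < t
    · simp [Set.indicator, h, hp.trans h]
    · simp [Set.indicator, h]
  have hm : MeasurableSet {p : (Fin 3 → ℝ) × ℝ | GG a b p.1 < p.2} :=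
    measurableSet_lt (hG.comp measurable_fst) measurable_snd
  rw [h1, lintegral_lintegral_swap, ← lintegral_mul_const]
  · refine setLIntegral_congr_fun measurableSet_Ioi fun t ht => ?_
    have ht : 0 < t := ht
    have : ∀ y, {p : (Fin 3 → ℝ) × ℝ | GG a b p.1 < p.2}.indicator
        (fun p => ENNReal.ofReal (f p.2)) (y, t)
        = {y | GG a b y < t}.indicator (fun _ => ENNReal.ofReal (f t)) y := by
      intro y
      simp [Set.indicator]
    simp only [this]
    rw [lintegral_indicator_const (measurableSet_lt hG measurable_const), GG_scale ha hb ht,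
      ENNReal.ofReal_mul (by positivity)]
    ring
  · fun_prop
  · refine Measurable.aemeasurable ?_
    exact Measurable.indicator (by fun_prop) hm

lemma lint_of_int {X : Type*} [MeasurableSpace X] {μ : Measure X} {f : X → ℝ} {c : ℝ} (hc : 0 < c)
    (h : ∫ x, f x ∂μ = c) (hf : 0 ≤ᵐ[μ] f) : ∫⁻ x, ENNReal.ofReal (f x) ∂μ = ENNReal.ofReal c := by
  rw [← h, ofReal_integral_eq_lintegral_ofReal (Integrable.of_integral_ne_zero (by rw [h]; exact hc.ne')) hf]

lemma tail_exp (y : ℝ) : ENNReal.ofReal (Real.exp (-y)) =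
    ∫⁻ t in Set.Ioi y, ENNReal.ofReal (Real.exp (-t)) :=
  (lint_of_int (Real.exp_pos _) (integral_exp_neg_Ioi y) (ae_of_all _ fun _ => (Real.exp_pos _).le)).symm

lemma tail_F {g p y : ℝ} (hg : 0 < g) (hp : 0 < p) (hy : 0 < y) :
    ENNReal.ofReal (1 - Real.exp (-(g * y ^ (-p)))) =
    ∫⁻ t in Set.Ioi y, ENNReal.ofReal (g * (p * t ^ (-p - 1)) * Real.exp (-(g * t ^ (-p)))) := by
  symm
  apply lint_of_int
  · have : 0 < g * y ^ (-p) := by positivity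
    simp [this]
  · apply integral_Ioi_of_hasDerivAt_of_nonneg' (g := fun t => Real.exp (-(g * t ^ (-p))))
    · intro x hx
      have hx : 0 < x := lt_of_lt_of_le hy hx
      have := (((Real.hasDerivAt_rpow_const (p := -p) (Or.inl hx.ne')).const_mul g).neg).exp
      have e : g * (p * x ^ (-p - 1)) * Real.exp (-(g * x ^ (-p)))
          = Real.exp (-(g * x ^ (-p))) * -(g * (-p * x ^ (-p - 1))) := by ring
      rw [e]
      exact this
    · intro x hx
      have hx : 0 < x := lt_trans hy hx
      positivity
    · have := (((tendsto_rpow_neg_atTop hp).const_mul g).neg).rexp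
      simpa using this
  · filter_upwards [ae_restrict_mem measurableSet_Ioi] with x hx
    have hx : 0 < x := lt_trans hy hx
    simp only [Pi.zero_apply]
    positivity

lemma int_f {g p s : ℝ} (hg : 0 < g) (hp : 0 < p) (hs : s < p) :
    ∫ t in Set.Ioi 0, t ^ s * (g * (p * t ^ (-p - 1)) * Real.exp (-(g * t ^ (-p)))) =
      g ^ (s / p) * Real.Gamma (1 - s / p) := by
  have hσ : 0 < 1 - s / p := by rw [sub_pos, div_lt_one hp]; exact hs
  have h := integral_comp_rpow_Ioi
    (fun y => g * (y ^ ((1 - s / p) - 1) * Real.exp (-(g * y)))) (p := -p) (by linarith)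
  rw [integral_const_mul, Real.integral_rpow_mul_exp_neg_mul_Ioi hσ hg] at h
  calc _ = _ := ?_
    _ = _ := h
    _ = _ := ?_
  · refine setIntegral_congr_fun measurableSet_Ioi fun t ht => ?_
    have ht : 0 < t := ht
    simp only [smul_eq_mul, abs_neg, abs_of_pos hp]
    rw [← Real.rpow_mul ht.le]
    have : -p * (1 - s / p - 1) = s := by field_simp; ring
    rw [this]
    ring
  · rw [one_div, Real.inv_rpow hg.le, ← Real.rpow_neg hg.le, ← mul_assoc]
    nth_rewrite 1 [← Real.rpow_one g]
    rw [← Real.rpow_add hg]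
    congr 2
    ring

/-- Explicit evaluation of `∫_{ℝ³} (1 - e^{-u(x)}) dx` in terms of Gamma functions. -/
theorem integral_one_sub_exp_neg_u (g α β γ η : ℝ) (hg : 0 < g) (hα : 2 < α) (hβ : 0 < β)
    (hγ₁ : α / (α - 2) < γ) (hγ₂ : γ < 3 * α / (α - 2))
    (hη : η = 3 * α * γ / (2 * γ + α)) :
    ∫ x : EuclideanSpace ℝ (Fin 3), (1 - Real.exp (-(uFun g α β γ x))) =
      2 * π * g ^ (3 / η) * (β * η) / (3 * α * γ) *
        (Real.Gamma (β / α) * Real.Gamma (β / (2 * γ)) / Real.Gamma (3 * β / (2 * η))) *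
        Real.Gamma ((η - 3) / η) := by
  have hα0 : 0 < α := by linarith
  have hα2 : 0 < α - 2 := by linarith
  have hγ0 : 0 < γ := lt_trans (by positivity) hγ₁
  have hη0 : 0 < η := by rw [hη]; positivity
  have ha : 0 < 2 * α / β := by positivity
  have hb : 0 < 2 * γ / β := by positivity
  have hs : 2 / (2 * α / β) + 1 / (2 * γ / β) = 3 * β / (2 * η) := by
    rw [hη]; field_simp
  have h3η : 3 / η < 1 := by
    rw [div_lt_one hη0, hη, lt_div_iff₀ (by positivity)]
    rw [div_lt_iff₀ hα2] at hγ₁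
    nlinarith
  set s := 3 * β / (2 * η) with hsdef
  have hs0 : 0 < s := by positivity
  have hsp : s / (β / 2) = 3 / η := by rw [hsdef]; field_simp
  have hsβ : s < β / 2 := by
    rw [← div_lt_one (by positivity), hsp]; exact h3η
  have A := layer ha hb (fun y => Real.exp (-y)) (fun y => Real.exp (-y)) (by fun_prop)
    (fun y _ => tail_exp y)
  have B := layer ha hb (fun y => 1 - Real.exp (-(g * y ^ (-(β / 2)))))
    (fun t => g * (β / 2 * t ^ (-(β / 2) - 1)) * Real.exp (-(g * t ^ (-(β / 2))))) (by fun_prop)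
    (fun y hy => tail_F hg (by positivity) hy)
  rw [hs] at A B
  have g1 : 0 < Real.Gamma (2 / (2 * α / β) + 1) := Real.Gamma_pos_of_pos (by positivity)
  have g2 : 0 < Real.Gamma (1 / (2 * γ / β) + 1) := Real.Gamma_pos_of_pos (by positivity)
  have g3 : 0 < Real.Gamma (s + 1) := Real.Gamma_pos_of_pos (by positivity)
  have g4 : 0 < Real.Gamma (1 - s / (β / 2)) := Real.Gamma_pos_of_pos (by rw [hsp]; linarith)
  rw [lint_of_int (by positivity) (GG_int ha hb) (ae_of_all _ fun _ => (Real.exp_pos _).le),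
    lint_of_int (c := Real.Gamma (s + 1)) g3 ?_ ?_] at A
  rotate_left
  · rw [Real.Gamma_eq_integral (by positivity)]
    refine integral_congr_ae (ae_of_all _ fun t => ?_)
    simp [mul_comm]
  · filter_upwards [ae_restrict_mem measurableSet_Ioi] with x hx
    have hx : 0 < x := hx
    simp only [Pi.zero_apply]
    positivity
  rw [lint_of_int (by positivity) (int_f hg (by positivity) hsβ) ?_] at B
  rotate_left
  · filter_upwards [ae_restrict_mem measurableSet_Ioi] with x hx
    have hx : 0 < x := hx
    simp only [Pi.zero_apply]
    positivity
  have A' := congrArg ENNReal.toReal A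
  have B' := congrArg ENNReal.toReal B
  rw [ENNReal.toReal_mul, ENNReal.toReal_ofReal (by positivity), ENNReal.toReal_ofReal g3.le] at A'
  rw [ENNReal.toReal_mul, ENNReal.toReal_ofReal (by positivity),
    ← integral_eq_lintegral_of_nonneg_ae] at B'
  rotate_left
  · refine ae_of_all _ fun y => ?_
    have := GG_nonneg (2 * α / β) (2 * γ / β) y
    simp only [Pi.zero_apply, sub_nonneg, Real.exp_le_one_iff, neg_nonpos]
    positivity
  · have := GG_meas (2 * α / β) (2 * γ / β)
    exact Measurable.aestronglyMeasurable (by fun_prop)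
  have C := (EuclideanSpace.volume_preserving_symm_measurableEquiv_toLp (Fin 3)).integral_comp'
    (fun y => 1 - Real.exp (-(g * GG (2 * α / β) (2 * γ / β) y ^ (-(β / 2)))))
  calc _ = _ := ?_
    _ = _ := C
    _ = _ := B'
    _ = _ := ?_
  · rfl
  · set V := (volume {y | GG (2 * α / β) (2 * γ / β) y < 1}).toReal
    have hV : V = 2 * π * Real.Gamma (2 / (2 * α / β) + 1) * Real.Gamma (1 / (2 * γ / β) + 1)
        / Real.Gamma (s + 1) := by
      rw [eq_div_iff g3.ne', A', mul_comm]
    have e1 : 2 / (2 * α / β) = β / α := by field_simp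
    have e2 : 1 / (2 * γ / β) = β / (2 * γ) := by field_simp
    have e3 : (η - 3) / η = 1 - 3 / η := by field_simp
    rw [hV, hsp, e1, e2, e3, Real.Gamma_add_one (by positivity), Real.Gamma_add_one (by positivity),
      Real.Gamma_add_one hs0.ne']
    have g5 : Real.Gamma s ≠ 0 := (Real.Gamma_pos_of_pos hs0).ne'
    have e4 : s * (2 * η) = 3 * β := by rw [hsdef]; field_simp
    have e5 : β = s * (2 * η) / 3 := by linarith
    generalize Real.Gamma (1 - 3 / η) = X1
    generalize g ^ (3 / η) = X2
    generalize Real.Gamma (β / α) = X3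
    generalize Real.Gamma (β / (2 * γ)) = X4
    generalize Real.Gamma s = X5 at g5 ⊢
    rw [hsdef]
    field_simp
end
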